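/- Let T ≥ 2, τ ∈ {1,…,T}. Suppose the file F and shares M_1,…,M_T satisfy recoverability with threshold τ and leakage symmetry. Then for every t ∈ {1,…,T}, H(M_t) ≥ H(F)/τ. -/

import Mathlib

/-!
Fix a server `t`. Removing `M_t` from a family of shares lowers the leakage `I(F; M_S)` by at most
`H(M_t)` (`mutInf_shares_le_erase`): `H(M_S) ≤ H(M_{S∖t}) + H(M_t)` by subadditivity
(`ent_pair_le`) and `H(F, M_S) ≥ H(F, M_{S∖t})` by monotonicity (`ent_le_of_determines`). By
leakage symmetry every set of `k` shares leaks as much as one containing `t`, so induction on `k`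
gives `I(F; M_S) ≤ |S| · H(M_t)` for all `S` (`mutInf_shares_le_card_mul`). When `|S| = τ`,
recoverability makes the left side equal to `H(F)`.
-/

open scoped BigOperators
open Classical

noncomputable section

/-- Probability of an event `A` under the probability mass function `p` on a finite
sample space `Ω`. -/
def prb {Ω : Type} [Fintype Ω] (p : Ω → ℝ) (A : Set Ω) : ℝ :=
  ∑ ω, if ω ∈ A then p ω else 0

/-- Shannon entropy (in bits, base-2 logarithm) of a random variable `X` defined on a
finite sample space with probability mass function `p`, with the convention
`0 * log 0 = 0`. -/
def ent {Ω V : Type} [Fintype Ω] [Fintype V] (p : Ω → ℝ) (X : Ω → V) : ℝ :=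
  -∑ v, prb p {ω | X ω = v} * Real.logb 2 (prb p {ω | X ω = v})

/-- Conditional Shannon entropy `H(X | Y) = H(X, Y) - H(Y)`. -/
def condEnt {Ω V W : Type} [Fintype Ω] [Fintype V] [Fintype W]
    (p : Ω → ℝ) (X : Ω → V) (Y : Ω → W) : ℝ :=
  ent p (fun ω => (X ω, Y ω)) - ent p Y

/-- Mutual information `I(X ; Y) = H(X) + H(Y) - H(X, Y)`. -/
def mutInf {Ω V W : Type} [Fintype Ω] [Fintype V] [Fintype W]
    (p : Ω → ℝ) (X : Ω → V) (Y : Ω → W) : ℝ :=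
  ent p X + ent p Y - ent p (fun ω => (X ω, Y ω))

/-- The tuple of shares `M_S = (M_t)_{t ∈ S}` viewed as a single random variable. -/
def shares {Ω : Type} {T : ℕ} {χ : Fin T → Type} (M : ∀ t, Ω → χ t)
    (S : Finset (Fin T)) : Ω → (∀ t : S, χ t.1) :=
  fun ω t => M t.1 ω

/-- Law of the unconscious statistician. -/
lemma sum_mul_comp {Ω V : Type} [Fintype Ω] [Fintype V] (p : Ω → ℝ) (X : Ω → V) (f : V → ℝ) :
    ∑ v, prb p {ω | X ω = v} * f v = ∑ ω, p ω * f (X ω) := by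
  simp only [prb, Finset.sum_mul, Set.mem_ofPred_eq]
  rw [Finset.sum_comm]
  refine Finset.sum_congr rfl fun ω _ => ?_
  simp [ite_mul]

lemma ent_eq_sum {Ω V : Type} [Fintype Ω] [Fintype V] (p : Ω → ℝ) (X : Ω → V) :
    ent p X = -∑ ω, p ω * Real.logb 2 (prb p {ω' | X ω' = X ω}) := by
  rw [ent, sum_mul_comp p X (fun v => Real.logb 2 (prb p {ω' | X ω' = v}))]

lemma prb_mono {Ω : Type} [Fintype Ω] {p : Ω → ℝ} (hp0 : ∀ ω, 0 ≤ p ω) {A B : Set Ω}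
    (h : A ⊆ B) : prb p A ≤ prb p B := by
  refine Finset.sum_le_sum fun ω _ => ?_
  by_cases hA : ω ∈ A
  · simp [hA, h hA]
  · by_cases hB : ω ∈ B <;> simp [hA, hB, hp0 ω]

lemma prb_nonneg {Ω : Type} [Fintype Ω] {p : Ω → ℝ} (hp0 : ∀ ω, 0 ≤ p ω) (A : Set Ω) :
    0 ≤ prb p A :=
  Finset.sum_nonneg fun ω _ => by split_ifs <;> simp [hp0 ω]

lemma le_prb {Ω : Type} [Fintype Ω] {p : Ω → ℝ} (hp0 : ∀ ω, 0 ≤ p ω) {A : Set Ω} {ω : Ω}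
    (h : ω ∈ A) : p ω ≤ prb p A := by
  have := Finset.single_le_sum (f := fun ω => if ω ∈ A then p ω else 0)
    (fun ω _ => by split_ifs <;> simp [hp0 ω]) (Finset.mem_univ ω)
  simpa [h, prb] using this

/-- If `Y` is a function of `X`, then `H(Y) ≤ H(X)`. The functional dependence is expressed on
sample points, so no explicit map between the value types is needed. -/
lemma ent_le_of_determines {Ω V W : Type} [Fintype Ω] [Fintype V] [Fintype W] {p : Ω → ℝ}
    (hp0 : ∀ ω, 0 ≤ p ω) (X : Ω → V) (Y : Ω → W)
    (h : ∀ ω ω', X ω = X ω' → Y ω = Y ω') : ent p Y ≤ ent p X := by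
  rw [ent_eq_sum, ent_eq_sum, neg_le_neg_iff]
  refine Finset.sum_le_sum fun ω _ => ?_
  rcases (hp0 ω).eq_or_lt with h0 | h0
  · simp [← h0]
  · refine mul_le_mul_of_nonneg_left ?_ h0.le
    refine Real.logb_le_logb_of_le one_lt_two ?_ ?_
    · exact h0.trans_le (le_prb hp0 (by simp))
    · exact prb_mono hp0 fun ω' h' => h _ _ h'

lemma sum_prb_eq_one {Ω V : Type} [Fintype Ω] [Fintype V] {p : Ω → ℝ} (hp1 : ∑ ω, p ω = 1)
    (X : Ω → V) : ∑ v, prb p {ω | X ω = v} = 1 := by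
  simpa [hp1] using sum_mul_comp p X (fun _ => 1)

/-- Subadditivity `H(X, Y) ≤ H(X) + H(Y)`, from `log x ≤ x - 1` applied to the likelihood ratio
of the product of the marginals against the joint law. -/
lemma ent_pair_le {Ω V W : Type} [Fintype Ω] [Fintype V] [Fintype W] {p : Ω → ℝ}
    (hp0 : ∀ ω, 0 ≤ p ω) (hp1 : ∑ ω, p ω = 1) (X : Ω → V) (Y : Ω → W) :
    ent p (fun ω => (X ω, Y ω)) ≤ ent p X + ent p Y := by
  set a : V → ℝ := fun v => prb p {ω | X ω = v} with ha
  set b : W → ℝ := fun w => prb p {ω | Y ω = w} with hb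
  set c : V × W → ℝ := fun z => prb p {ω | (X ω, Y ω) = z} with hc
  have ratio_le : ∑ ω, p ω * (a (X ω) * b (Y ω) / c (X ω, Y ω)) ≤ 1 := by
    rw [← sum_mul_comp p (fun ω => (X ω, Y ω)) (fun z => a z.1 * b z.2 / c z)]
    calc ∑ z, c z * (a z.1 * b z.2 / c z) ≤ ∑ z : V × W, a z.1 * b z.2 := by
          refine Finset.sum_le_sum fun z _ => ?_
          by_cases hz : c z = 0
          · simpa [hz] using mul_nonneg (prb_nonneg hp0 _) (prb_nonneg hp0 _)
          · exact (mul_div_cancel₀ _ hz).le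
      _ = 1 := by
          rw [Fintype.sum_prod_type, ← Finset.sum_mul_sum, sum_prb_eq_one hp1 X,
            sum_prb_eq_one hp1 Y, one_mul]
  have hlog2 : 0 < Real.log 2 := Real.log_pos one_lt_two
  have pointwise : ∀ ω, p ω * Real.logb 2 (a (X ω)) + p ω * Real.logb 2 (b (Y ω))
      - p ω * Real.logb 2 (c (X ω, Y ω))
      ≤ (p ω * (a (X ω) * b (Y ω) / c (X ω, Y ω)) - p ω) / Real.log 2 := by
    intro ω
    rcases (hp0 ω).eq_or_lt with h0 | h0
    · simp [← h0]
    · have h1 : 0 < a (X ω) := h0.trans_le (le_prb hp0 (by simp))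
      have h2 : 0 < b (Y ω) := h0.trans_le (le_prb hp0 (by simp))
      have h3 : 0 < c (X ω, Y ω) := h0.trans_le (le_prb hp0 (by simp))
      have key := Real.log_le_sub_one_of_pos (div_pos (mul_pos h1 h2) h3)
      rw [Real.log_div (mul_pos h1 h2).ne' h3.ne', Real.log_mul h1.ne' h2.ne'] at key
      rw [le_div_iff₀ hlog2]
      simp only [Real.logb]
      have := mul_le_mul_of_nonneg_left key h0.le
      field_simp at this ⊢
      linarith
  have total := Finset.sum_le_sum fun ω (_ : ω ∈ Finset.univ) => pointwise ω
  rw [← Finset.sum_div, Finset.sum_sub_distrib, Finset.sum_sub_distrib,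
    Finset.sum_add_distrib, hp1] at total
  have := total.trans (div_nonpos_of_nonpos_of_nonneg (sub_nonpos.2 ratio_le) hlog2.le)
  rw [ent_eq_sum, ent_eq_sum, ent_eq_sum]
  simp only [ha, hb, hc] at this
  linarith

/-- The empty family of shares leaks nothing. -/
lemma mutInf_shares_empty_le {Ω : Type} [Fintype Ω] {p : Ω → ℝ}
    (hp0 : ∀ ω, 0 ≤ p ω) (hp1 : ∑ ω, p ω = 1) {T : ℕ} {𝔽 : Type} [Fintype 𝔽] (F : Ω → 𝔽)
    {χ : Fin T → Type} [∀ t, Fintype (χ t)] (M : ∀ t, Ω → χ t) :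
    mutInf p F (shares M ∅) ≤ 0 := by
  have hF := ent_le_of_determines hp0 (fun ω => (F ω, shares M ∅ ω)) F
    fun ω ω' h => congrArg Prod.fst h
  have h0 : ent p (shares M ∅) = 0 := by
    have hprb : ∀ ω, prb p {ω' | shares M ∅ ω' = shares M ∅ ω} = 1 := fun ω => by
      have hall : ∀ ω', shares M ∅ ω' = shares M ∅ ω := fun ω' => by
        funext s
        exact absurd s.2 (Finset.notMem_empty _)
      simp [prb, hall, hp1]
    simp [ent_eq_sum, hprb]
  unfold mutInf
  linarith

/-- Dropping one share lowers the leakage by at most the entropy of that share. -/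
lemma mutInf_shares_le_erase {Ω : Type} [Fintype Ω] {p : Ω → ℝ}
    (hp0 : ∀ ω, 0 ≤ p ω) (hp1 : ∑ ω, p ω = 1) {T : ℕ} {𝔽 : Type} [Fintype 𝔽] (F : Ω → 𝔽)
    {χ : Fin T → Type} [∀ t, Fintype (χ t)] (M : ∀ t, Ω → χ t) (S : Finset (Fin T))
    (t : Fin T) :
    mutInf p F (shares M S) ≤ mutInf p F (shares M (S.erase t)) + ent p (M t) := by
  have h1 : ent p (shares M S) ≤ ent p (fun ω => (shares M (S.erase t) ω, M t ω)) := by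
    refine ent_le_of_determines hp0 _ _ fun ω ω' h => ?_
    funext s
    rw [Prod.mk.injEq] at h
    rcases s with ⟨s, hs⟩
    by_cases hst : s = t
    · subst hst
      exact h.2
    · exact congrFun h.1 ⟨s, Finset.mem_erase.2 ⟨hst, hs⟩⟩
  have h2 := ent_pair_le hp0 hp1 (shares M (S.erase t)) (M t)
  have h3 : ent p (fun ω => (F ω, shares M (S.erase t) ω))
      ≤ ent p (fun ω => (F ω, shares M S ω)) := by
    refine ent_le_of_determines hp0 _ _ fun ω ω' h => ?_
    rw [Prod.mk.injEq] at h ⊢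
    refine ⟨h.1, ?_⟩
    funext s
    exact congrFun h.2 ⟨s.1, Finset.mem_of_mem_erase s.2⟩
  unfold mutInf
  linarith

/-- Under leakage symmetry, `k` arbitrary shares leak at most `k` times the entropy of any one
fixed share `M_t`, whether or not `t` is among them. -/
lemma mutInf_shares_le_card_mul {Ω : Type} [Fintype Ω] {p : Ω → ℝ}
    (hp0 : ∀ ω, 0 ≤ p ω) (hp1 : ∑ ω, p ω = 1) {T : ℕ} {𝔽 : Type} [Fintype 𝔽] (F : Ω → 𝔽)
    {χ : Fin T → Type} [∀ t, Fintype (χ t)] (M : ∀ t, Ω → χ t)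
    (hsym : ∀ t : ℕ, 1 ≤ t → t ≤ T → ∃ C : ℝ, 0 ≤ C ∧
      ∀ S : Finset (Fin T), S.card = t → mutInf p F (shares M S) = C * ent p F)
    (t : Fin T) (k : ℕ) :
    ∀ S : Finset (Fin T), S.card = k → mutInf p F (shares M S) ≤ k * ent p (M t) := by
  induction k with
  | zero =>
    intro S hS
    rw [Finset.card_eq_zero] at hS
    subst hS
    simpa using mutInf_shares_empty_le hp0 hp1 F M
  | succ k ih =>
    intro S hS
    have hkT : k + 1 ≤ T := by
      simpa [hS] using Finset.card_le_univ S
    -- Symmetry lets `S` be replaced by a set of the same size that contains `t`.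
    obtain ⟨S₀, htS₀, -, hS₀⟩ := Finset.exists_subsuperset_card_eq
      (Finset.subset_univ ({t} : Finset (Fin T))) (n := k + 1) (by simp) (by simpa using hkT)
    have htS₀ : t ∈ S₀ := Finset.singleton_subset_iff.1 htS₀
    obtain ⟨C, -, hC⟩ := hsym (k + 1) (Nat.le_add_left 1 k) hkT
    rw [hC S hS, ← hC S₀ hS₀]
    have hstep := mutInf_shares_le_erase hp0 hp1 F M S₀ t
    have hih := ih (S₀.erase t) (by rw [Finset.card_erase_of_mem htS₀, hS₀]; rfl)
    push_cast
    linarith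

/-- Under recoverability with threshold `τ` and leakage symmetry,
every individual share satisfies `H(M_t) ≥ H(F) / τ`. -/
theorem individual_share_lower_bound_reconstruction
    {Ω : Type} [Fintype Ω] (p : Ω → ℝ)
    (hp0 : ∀ ω, 0 ≤ p ω) (hp1 : ∑ ω, p ω = 1)
    {T : ℕ} (hT : 2 ≤ T) {τ : ℕ} (hτ1 : 1 ≤ τ) (hτT : τ ≤ T)
    {𝔽 : Type} [Fintype 𝔽] (F : Ω → 𝔽) (hF : 0 < ent p F)
    {χ : Fin T → Type} [∀ t, Fintype (χ t)] (M : ∀ t, Ω → χ t)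
    (hrec : ∀ S : Finset (Fin T), τ ≤ S.card → condEnt p F (shares M S) = 0)
    (hsym : ∀ t : ℕ, 1 ≤ t → t ≤ T → ∃ C : ℝ, 0 ≤ C ∧
      ∀ S : Finset (Fin T), S.card = t → mutInf p F (shares M S) = C * ent p F) :
    ∀ t : Fin T, ent p (M t) ≥ ent p F / (τ : ℝ) := by
  intro t
  obtain ⟨S, -, hS⟩ := Finset.exists_subset_card_eq
    (s := (Finset.univ : Finset (Fin T))) (n := τ) (by simpa using hτT)
  have hle := mutInf_shares_le_card_mul hp0 hp1 F M hsym t τ S hS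
  have hr := hrec S hS.ge
  have hτ : (0 : ℝ) < τ := by exact_mod_cast hτ1
  rw [ge_iff_le, div_le_iff₀ hτ]
  unfold mutInf at hle
  unfold condEnt at hr
  linarith

end
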